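/- arXiv:1401.7598 — 3 statements merged into one kernel-verified Lean document; each statement's English description precedes it below -/
import Mathlib

section
/- (Mann's theorem) If A and B are sets of nonnegative integers each containing 0, then σ(A+B) ≥ min(1, σ(A) + σ(B)). -/
/-!
Dyson's proof: if `γ ≤ 1` and `γ m ≤ A(m) + B(m)` for all `m ≤ n`, then `γ n ≤ (A + B)(n)`, by
induction on `B(n)`. If `A` absorbs `B` up to `n`, meaning `a + b ∈ A` whenever `a + b ≤ n`, then
for any positive `b ∈ B` with `b ≤ n` the set `A` contains the translate by `b` of its own initial
segment, and `γ n ≤ A(n)` follows by induction on `n`. Otherwise take the least `e ∈ A` at which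
absorption fails and replace `(A, B)` by `(A ∪ (e + B), B ∩ (A - e))`. This decreases `B(n)` and
does not enlarge `A + B`. It preserves the hypothesis because `A` still absorbs `B` below `e`, which
makes up for the elements `b` removed from `B` whose replacements `e + b` are too large to count.
-/

open Pointwise Filter

/-- The counting function of a set of nonnegative integers: the number of
positive elements of `A` that are at most `n`. -/
noncomputable def countingFn (A : Set ℕ) (n : ℕ) : ℕ := (A ∩ Set.Icc 1 n).ncard

/-- The Shnirel'man density `σ(A) = inf_{n ≥ 1} A(n)/n`. -/
noncomputable def shnirelmanDensity (A : Set ℕ) : ℝ :=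
  ⨅ n : {n : ℕ // 0 < n}, (countingFn A (n : ℕ) : ℝ) / ((n : ℕ) : ℝ)

/-- The lower asymptotic density `d_L(A) = liminf_{n → ∞} A(n)/n`. -/
noncomputable def lowerDensity (A : Set ℕ) : ℝ :=
  liminf (fun n : ℕ => (countingFn A n : ℝ) / (n : ℝ)) atTop

/-- `A` is an additive basis of order `h`: every nonnegative integer is the
sum of exactly `h` elements of `A` (with repetitions allowed). -/
def IsBasisOfOrder (A : Set ℕ) (h : ℕ) : Prop :=
  ∀ n : ℕ, ∃ c : Fin h → ℕ, (∀ i, c i ∈ A) ∧ ∑ i, c i = n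

/-- `A` is an asymptotic basis of order `h`: every sufficiently large integer
is the sum of exactly `h` elements of `A` (with repetitions allowed). -/
def IsAsymptoticBasisOfOrder (A : Set ℕ) (h : ℕ) : Prop :=
  ∀ᶠ n : ℕ in atTop, ∃ c : Fin h → ℕ, (∀ i, c i ∈ A) ∧ ∑ i, c i = n

/-- A minimal asymptotic basis of order `h` is an asymptotic basis of order `h`
no proper subset of which is an asymptotic basis of order `h`. -/
def IsMinimalAsymptoticBasisOfOrder (A : Set ℕ) (h : ℕ) : Prop :=
  IsAsymptoticBasisOfOrder A h ∧
    ∀ B : Set ℕ, B ⊂ A → ¬ IsAsymptoticBasisOfOrder B h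

/-- A maximal asymptotic nonbasis of order `h` is a set that is not an
asymptotic basis of order `h`, but such that adjoining any element outside it
produces an asymptotic basis of order `h`. -/
def IsMaximalAsymptoticNonbasisOfOrder (A : Set ℕ) (h : ℕ) : Prop :=
  ¬ IsAsymptoticBasisOfOrder A h ∧
    ∀ b : ℕ, b ∉ A → IsAsymptoticBasisOfOrder (A ∪ {b}) h

section Counting

variable {A B : Set ℕ} {n : ℕ}

lemma countingFn_eq_card_filter (A : Set ℕ) [DecidablePred (· ∈ A)] (n : ℕ) :
    countingFn A n = Finset.card {a ∈ Finset.Ioc 0 n | a ∈ A} := by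
  rw [countingFn, ← Set.ncard_coe_finset]
  congr 1
  ext a
  simp only [Set.mem_inter_iff, Set.mem_Icc, Finset.coe_filter, Finset.mem_Ioc, Set.mem_ofPred_eq,
    Nat.succ_le_iff, and_comm]

lemma shnirelmanDensity_eq_schnirelmannDensity (A : Set ℕ) [DecidablePred (· ∈ A)] :
    shnirelmanDensity A = schnirelmannDensity A := by
  simp only [shnirelmanDensity, schnirelmannDensity, countingFn_eq_card_filter]

lemma shnirelmanDensity_mul_le_countingFn (A : Set ℕ) (n : ℕ) :
    shnirelmanDensity A * n ≤ countingFn A n := by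
  classical
  rw [shnirelmanDensity_eq_schnirelmannDensity, countingFn_eq_card_filter]
  exact schnirelmannDensity_mul_le_card_filter

lemma le_shnirelmanDensity {x : ℝ} (h : ∀ n : ℕ, x * n ≤ countingFn A n) :
    x ≤ shnirelmanDensity A := by
  classical
  rw [shnirelmanDensity_eq_schnirelmannDensity, le_schnirelmannDensity_iff]
  intro n hn
  rw [le_div_iff₀ (by exact_mod_cast hn), ← countingFn_eq_card_filter]
  exact h n

lemma countingFn_mono (h : A ⊆ B) : countingFn A n ≤ countingFn B n :=
  Set.ncard_le_ncard (Set.inter_subset_inter_left _ h)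

lemma countingFn_lt_countingFn (h : A ⊆ B) {b : ℕ} (hbB : b ∈ B) (hbA : b ∉ A) (hb : 0 < b)
    (hbn : b ≤ n) : countingFn A n < countingFn B n :=
  Set.ncard_lt_ncard <| (Set.ssubset_iff_of_subset (Set.inter_subset_inter_left _ h)).2
    ⟨b, ⟨hbB, hb, hbn⟩, fun hb' => hbA hb'.1⟩

lemma countingFn_add_countingFn_add_one_le {k r : ℕ} (hA : 0 ∈ A)
    (h : ∀ a ∈ A, a ≤ r → a + (k + 1) ∈ A) :
    countingFn A k + countingFn A r + 1 ≤ countingFn A (k + 1 + r) := by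
  have hinsert : (insert 0 (A ∩ Set.Icc 1 r)).ncard = countingFn A r + 1 :=
    Set.ncard_insert_of_notMem (by simp)
  rw [add_assoc, ← hinsert, ← Set.ncard_image_of_injective _ (add_left_injective (k + 1)),
    countingFn, ← Set.ncard_union_eq]
  · refine Set.ncard_le_ncard (Set.union_subset ?_ ?_)
    · exact Set.inter_subset_inter_right _ (Set.Icc_subset_Icc_right (by omega))
    · rintro _ ⟨a, rfl | ⟨ha, -, har⟩, rfl⟩
      · exact ⟨h 0 hA r.zero_le, by simp⟩
      · exact ⟨h a ha har, by simp only [Set.mem_Icc]; omega⟩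
  · rw [Set.disjoint_left]
    rintro _ ⟨-, -, hk⟩ ⟨a, -, rfl⟩
    simp only at hk
    omega

end Counting

section DysonTransform

variable {M : Type*} [AddCommSemigroup M]

/-- The first component of the Dyson transform of the pair `(A, B)` at `e`, in which `A` is
enlarged by the translate of `B` by `e`. -/
def dysonLeft (e : M) (A B : Set M) : Set M := A ∪ (e +ᵥ B)

/-- The second component of the Dyson transform of the pair `(A, B)` at `e`, in which `B` is
cut down to the elements whose translate by `e` was in `A` already. The preimage plays the role of
`-e + A`, as `M` need not have negatives. -/
def dysonRight (e : M) (A B : Set M) : Set M := B ∩ (e + ·) ⁻¹' A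

lemma dysonLeft_add_dysonRight_subset (e : M) (A B : Set M) :
    dysonLeft e A B + dysonRight e A B ⊆ A + B := by
  rintro _ ⟨x, hx | ⟨b, hb, rfl⟩, c, ⟨hcB, hcA⟩, rfl⟩
  · exact Set.add_mem_add hx hcB
  · simp only [vadd_eq_add, add_right_comm e b c]
    exact Set.add_mem_add hcA hb

end DysonTransform

section Mann

variable {A B : Set ℕ} {γ : ℝ} {e n : ℕ}

lemma mul_le_countingFn_of_absorbs (hA : 0 ∈ A) (hγ : γ ≤ 1)
    (hAB : ∀ a ∈ A, ∀ b ∈ B, a + b ≤ n → a + b ∈ A)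
    (h : ∀ m ≤ n, γ * m ≤ countingFn A m + countingFn B m) : γ * n ≤ countingFn A n := by
  induction n using Nat.strong_induction_on with
  | _ n ih =>
  have ih' (m : ℕ) (hm : m < n) : γ * m ≤ countingFn A m :=
    ih m hm (fun a ha b hb hab => hAB a ha b hb (hab.trans hm.le))
      fun l hl => h l (hl.trans hm.le)
  by_cases hempty : B ∩ Set.Icc 1 n = ∅
  · simpa [countingFn, hempty] using h n le_rfl
  obtain ⟨b, hb, hb_pos, hbn⟩ := Set.nonempty_iff_ne_empty.2 hempty
  obtain ⟨k, rfl⟩ := Nat.exists_eq_add_of_le' hb_pos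
  obtain ⟨r, rfl⟩ := Nat.exists_eq_add_of_le hbn
  have hcount : (countingFn A k + countingFn A r + 1 : ℝ) ≤ countingFn A (k + 1 + r) :=
    mod_cast countingFn_add_countingFn_add_one_le hA fun a ha har => hAB a ha _ hb (by omega)
  have hk := ih' k (by omega)
  have hr := ih' r (by omega)
  push_cast
  linarith

/-- Only the elements of `B` up to `k` are counted on the left, and each of them either stays in the
second component or has its translate counted in the first. -/
lemma countingFn_add_countingFn_le_dyson {k m : ℕ} (hkm : k ≤ m)
    (h : ∀ b ∈ B, b ≤ k → e + b ∈ A ∨ e + b ≤ m) :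
    countingFn A m + countingFn B k ≤
      countingFn (dysonLeft e A B) m + countingFn (dysonRight e A B) m := by
  set moved : Set ℕ := {b ∈ B ∩ Set.Icc 1 k | e + b ∉ A}
  have hfin : moved.Finite := (Set.toFinite (B ∩ Set.Icc 1 k)).subset (Set.sep_subset _ _)
  have hleft : countingFn A m + moved.ncard ≤ countingFn (dysonLeft e A B) m := by
    rw [← Set.ncard_image_of_injective moved (add_right_injective e), countingFn,
      ← Set.ncard_union_eq _ (Set.toFinite _) (hfin.image _)]
    · refine Set.ncard_le_ncard (Set.union_subset ?_ ?_)
      · exact Set.inter_subset_inter_left _ Set.subset_union_left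
      · rintro _ ⟨b, ⟨⟨hb, hb_pos, hbk⟩, hebA⟩, rfl⟩
        exact ⟨.inr ⟨b, hb, rfl⟩, hb_pos.trans (Nat.le_add_left b e),
          (h b hb hbk).resolve_left hebA⟩
    · rw [Set.disjoint_left]
      rintro _ ⟨hA, -⟩ ⟨b, hb, rfl⟩
      exact hb.2 hA
  have hright : countingFn B k ≤ countingFn (dysonRight e A B) m + moved.ncard := by
    refine (Set.ncard_le_ncard ?_ ((Set.toFinite _).union hfin)).trans (Set.ncard_union_le _ _)
    rintro b ⟨hb, hb_pos, hbk⟩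
    by_cases hebA : e + b ∈ A
    · exact .inl ⟨⟨hb, hebA⟩, hb_pos, hbk.trans hkm⟩
    · exact .inr ⟨⟨hb, hb_pos, hbk⟩, hebA⟩
  omega

lemma mul_le_countingFn_dyson (hA : 0 ∈ A) (hγ : γ ≤ 1) (heA : e ∈ A)
    (hAB : ∀ a ∈ A, a < e → ∀ b ∈ B, a + b ≤ n → a + b ∈ A)
    (h : ∀ m ≤ n, γ * m ≤ countingFn A m + countingFn B m) :
    γ * n ≤ countingFn (dysonLeft e A B) n + countingFn (dysonRight e A B) n := by
  set late : Set ℕ := {b ∈ B | b ≤ n ∧ e + b ∉ A ∧ n < e + b}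
  rcases late.eq_empty_or_nonempty with hempty | hnonempty
  · refine (h n le_rfl).trans (mod_cast countingFn_add_countingFn_le_dyson le_rfl ?_)
    intro b hb hbn
    by_contra! hb_late
    exact Set.eq_empty_iff_forall_notMem.1 hempty b ⟨hb, hbn, hb_late⟩
  obtain ⟨b, ⟨hb, hbn, hebA, hneb⟩, hleast⟩ : ∃ b, IsLeast late b :=
    ⟨_, isLeast_csInf hnonempty⟩
  have hb_ne : b ≠ 0 := fun hb0 => hebA (by simpa [hb0] using heA)
  obtain ⟨k, rfl⟩ := Nat.exists_eq_succ_of_ne_zero hb_ne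
  obtain ⟨r, rfl⟩ := Nat.exists_eq_add_of_le hbn
  have hdyson : countingFn A (k + 1 + r) + countingFn B k ≤
      countingFn (dysonLeft e A B) (k + 1 + r) + countingFn (dysonRight e A B) (k + 1 + r) := by
    refine countingFn_add_countingFn_le_dyson (by omega) fun c hc hck => ?_
    by_contra! hc_late
    exact hck.not_gt (hleast ⟨hc, by omega, hc_late⟩)
  -- All of `B` beyond `k` may be lost, but `A` absorbs `k + 1`, and this compensates for it.
  have hcount : countingFn A k + countingFn A r + 1 ≤ countingFn A (k + 1 + r) :=
    countingFn_add_countingFn_add_one_le hA fun a ha har =>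
      hAB a ha (by omega) _ hb (by omega)
  have hr : γ * r ≤ countingFn A r :=
    mul_le_countingFn_of_absorbs hA hγ
      (fun a ha b hb hab => hAB a ha (by omega) b hb (by omega)) fun m hm => h m (by omega)
  have hkγ := h k (by omega)
  have : (countingFn A k + countingFn A r + 1 + countingFn B k : ℝ) ≤
      countingFn (dysonLeft e A B) (k + 1 + r) + countingFn (dysonRight e A B) (k + 1 + r) := by
    exact_mod_cast (Nat.add_le_add_right hcount _).trans hdyson
  push_cast
  linarith

theorem mul_le_countingFn_add (hA : 0 ∈ A) (hB : 0 ∈ B) (hγ : γ ≤ 1)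
    (h : ∀ m ≤ n, γ * m ≤ countingFn A m + countingFn B m) : γ * n ≤ countingFn (A + B) n := by
  induction hk : countingFn B n using Nat.strong_induction_on generalizing A B with
  | _ k ih =>
  set nonabsorbing : Set ℕ := {a ∈ A | ∃ b ∈ B, a + b ≤ n ∧ a + b ∉ A}
  rcases nonabsorbing.eq_empty_or_nonempty with hempty | hnonempty
  · have hAB : ∀ a ∈ A, ∀ b ∈ B, a + b ≤ n → a + b ∈ A := fun a ha b hb hab =>
      by_contra fun hab' => Set.eq_empty_iff_forall_notMem.1 hempty a ⟨ha, b, hb, hab, hab'⟩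
    exact (mul_le_countingFn_of_absorbs hA hγ hAB h).trans
      (mod_cast countingFn_mono (Set.subset_add_left A hB))
  obtain ⟨e, ⟨heA, b, hb, hebn, hebA⟩, hleast⟩ : ∃ e, IsLeast nonabsorbing e :=
    ⟨_, isLeast_csInf hnonempty⟩
  have hb_pos : 0 < b := Nat.pos_of_ne_zero fun hb0 => hebA (by simpa [hb0] using heA)
  have hlt : countingFn (dysonRight e A B) n < k :=
    hk ▸ countingFn_lt_countingFn Set.inter_subset_left hb (fun hb' => hebA hb'.2) hb_pos (by omega)
  have hAB : ∀ a ∈ A, a < e → ∀ b ∈ B, a + b ≤ n → a + b ∈ A := fun a ha hae b hb hab =>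
    by_contra fun hab' => hae.not_ge (hleast ⟨ha, b, hb, hab, hab'⟩)
  have hA' : 0 ∈ dysonLeft e A B := .inl hA
  have hB' : 0 ∈ dysonRight e A B := ⟨hB, heA⟩
  refine (ih _ hlt hA' hB' (fun m hm => ?_) rfl).trans
    (mod_cast countingFn_mono (dysonLeft_add_dysonRight_subset e A B))
  exact mul_le_countingFn_dyson hA hγ heA
    (fun a ha hae b hb hab => hAB a ha hae b hb (hab.trans hm)) fun l hl => h l (hl.trans hm)

end Mann

theorem mann_theorem (A B : Set ℕ) (hA : 0 ∈ A) (hB : 0 ∈ B) :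
    shnirelmanDensity (A + B) ≥
      min 1 (shnirelmanDensity A + shnirelmanDensity B) := by
  refine le_shnirelmanDensity fun n => mul_le_countingFn_add hA hB (min_le_left _ _) fun m _ => ?_
  calc min 1 (shnirelmanDensity A + shnirelmanDensity B) * m
      ≤ (shnirelmanDensity A + shnirelmanDensity B) * m := by
        gcongr
        exact min_le_right _ _
    _ = shnirelmanDensity A * m + shnirelmanDensity B * m := add_mul _ _ _
    _ ≤ countingFn A m + countingFn B m :=
        add_le_add (shnirelmanDensity_mul_le_countingFn A m)
          (shnirelmanDensity_mul_le_countingFn B m)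
end

section
/- (Härtter) For every integer h ≥ 2, there exist uncountably many minimal asymptotic bases of order h; that is, the collection of sets A of nonnegative integers that are minimal asymptotic bases of order h is uncountable. -/
/-!
Colour the binary positions with `h` colours and let `A` be the set of positive integers whose
binary digits `1` all have the same colour. Splitting the digits of an integer by colour writes it
as a sum of at most `h` elements of `A`, and a summand greater than `1` can be broken up into two
elements of `A`, so `A` is an asymptotic basis of order `h`.

For minimality, fix `a ∈ A` of colour `i` and take a large `n` which below some bound has exactly
the digits of `a` at the positions of colour `i`, and digits `1` at all the other positions. If
every colour has a long enough block of consecutive positions, then carries alone cannot fill the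
block of a colour, so each of the `h - 1` colours other than `i` occurs among `h` elements of `A`
with sum `n`. At most two of these share a colour, and by parity the sum is then free of carries,
which forces one of them to be `a`. Uncountably many colourings satisfy the requirements, and `A`
determines the partition of the positions into colour classes.
-/

open Pointwise Filter

open Finset

section BinaryDigits

theorem testBit_sum_two_pow (F : Finset ℕ) (p : ℕ) : (∑ q ∈ F, 2 ^ q).testBit p ↔ p ∈ F := by
  rw [← Nat.mem_bitIndices, ← List.mem_toFinset, toFinset_bitIndices_sum_two_pow]

theorem testBit_iff_odd_div_two_pow (n p : ℕ) : n.testBit p ↔ Odd (n / 2 ^ p) := by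
  rw [Nat.testBit_eq_decide_div_mod_eq, decide_eq_true_iff, Nat.odd_iff]

theorem mod_two_pow_add_lt_of_testBit_eq_false {n t L : ℕ}
    (hn : ∀ p ∈ Set.Ico t (t + L), n.testBit p = false) : n % 2 ^ (t + L) < 2 ^ t := by
  refine Nat.lt_pow_two_of_testBit _ fun p hp => ?_
  rw [Nat.testBit_mod_two_pow]
  by_cases hpL : p < t + L
  · simp [hn p ⟨hp, hpL⟩]
  · simp [hpL]

theorem two_pow_sub_one_mul_le_mod_of_testBit {n t L : ℕ}
    (hn : ∀ p ∈ Set.Ico t (t + L), n.testBit p) : (2 ^ L - 1) * 2 ^ t ≤ n % 2 ^ (t + L) := by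
  suffices n / 2 ^ t % 2 ^ L = 2 ^ L - 1 by
    rw [← this, pow_add, ← Nat.mod_mul_right_div_self]
    exact Nat.div_mul_le_self _ _
  refine Nat.eq_of_testBit_eq fun p => ?_
  rw [Nat.testBit_mod_two_pow, Nat.testBit_two_pow_sub_one, Nat.testBit_div_two_pow]
  by_cases hp : p < L
  · simp [hp, hn (p + t) ⟨by omega, by omega⟩]
  · simp [hp]

variable {ι : Type*} {s : Finset ι} {b : ι → ℕ} {P : ℕ}

theorem sum_mod_two_pow_lt (hb : ∀ p < P, #{j ∈ s | (b j).testBit p} ≤ 1) :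
    ∑ j ∈ s, b j % 2 ^ P < 2 ^ P := by
  induction P with
  | zero => simp [Nat.mod_one]
  | succ P ih =>
    calc ∑ j ∈ s, b j % 2 ^ (P + 1)
        = ∑ j ∈ s, b j % 2 ^ P + 2 ^ P * #{j ∈ s | (b j).testBit P} := by
          rw [card_filter, mul_sum, ← sum_add_distrib]
          refine sum_congr rfl fun j _ => ?_
          rw [Nat.mod_pow_succ, ← Nat.toNat_testBit]
          cases (b j).testBit P <;> rfl
      _ < 2 ^ P + 2 ^ P * 1 :=
          add_lt_add_of_lt_of_le (ih fun p hp => hb p (by omega))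
            (Nat.mul_le_mul_left _ (hb P (by omega)))
      _ = 2 ^ (P + 1) := by ring

theorem testBit_sum_iff_odd_card (hb : ∀ p < P, #{j ∈ s | (b j).testBit p} ≤ 1) :
    (∑ j ∈ s, b j).testBit P ↔ Odd #{j ∈ s | (b j).testBit P} := by
  have hdiv : (∑ j ∈ s, b j) / 2 ^ P = ∑ j ∈ s, b j / 2 ^ P := by
    have hsplit : ∑ j ∈ s, b j = ∑ j ∈ s, b j % 2 ^ P + 2 ^ P * ∑ j ∈ s, b j / 2 ^ P := by
      simp only [mul_sum, ← sum_add_distrib, Nat.mod_add_div]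
    rw [hsplit, Nat.add_mul_div_left _ _ (by positivity), Nat.div_eq_of_lt (sum_mod_two_pow_lt hb),
      zero_add]
  simp only [testBit_iff_odd_div_two_pow, hdiv, odd_sum_iff_odd_card_odd]

theorem testBit_sum_iff_exists (hb : ∀ p ≤ P, #{j ∈ s | (b j).testBit p} ≤ 1) :
    (∑ j ∈ s, b j).testBit P ↔ ∃ j ∈ s, (b j).testBit P := by
  rw [testBit_sum_iff_odd_card fun p hp => hb p hp.le, ← filter_nonempty_iff, ← card_pos]
  have := hb P le_rfl
  interval_cases #{j ∈ s | (b j).testBit P} <;> simp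

theorem exists_testBit_of_testBit_sum_of_card_lt {t L : ℕ} (hs : s.Nonempty) (hL : #s < 2 ^ L)
    (hsum : ∀ p ∈ Set.Ico t (t + L), (∑ j ∈ s, b j).testBit p) :
    ∃ j ∈ s, ∃ p ∈ Set.Ico t (t + L), (b j).testBit p := by
  by_contra! hb
  have hlt : (2 ^ L - 1) * 2 ^ t < #s * 2 ^ t := calc
    (2 ^ L - 1) * 2 ^ t ≤ (∑ j ∈ s, b j) % 2 ^ (t + L) :=
      two_pow_sub_one_mul_le_mod_of_testBit hsum
    _ ≤ ∑ j ∈ s, b j % 2 ^ (t + L) := by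
      rw [sum_nat_mod]
      exact Nat.mod_le _ _
    _ < ∑ _j ∈ s, 2 ^ t :=
      sum_lt_sum_of_nonempty hs fun j hj =>
        mod_two_pow_add_lt_of_testBit_eq_false fun p hp => by simpa using hb j hj p hp
    _ = #s * 2 ^ t := by rw [sum_const, smul_eq_mul]
  have := lt_of_mul_lt_mul_right hlt (Nat.zero_le _)
  omega

end BinaryDigits

section Basis

theorem isAsymptoticBasisOfOrder_iff_mem_nsmul {A : Set ℕ} {h : ℕ} :
    IsAsymptoticBasisOfOrder A h ↔ ∀ᶠ n in atTop, n ∈ h • A := by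
  simp only [IsAsymptoticBasisOfOrder, Set.mem_nsmul_iff_sum]

theorem mem_succ_nsmul_of_mem_nsmul {A : Set ℕ} (hA : ∀ x ∈ A, 1 < x → x ∈ A + A) {m n : ℕ}
    (hn : n ∈ m • A) (hmn : m < n) : n ∈ (m + 1) • A := by
  induction m generalizing n with
  | zero => simp_all
  | succ m ih =>
    rw [succ_nsmul] at hn ⊢
    obtain ⟨y, hy, x, hx, rfl⟩ := hn
    have hmyx : m + 1 < y + x := hmn
    by_cases hx1 : 1 < x
    · rw [succ_nsmul, add_assoc]
      exact Set.add_mem_add hy (hA x hx hx1)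
    · exact Set.add_mem_add (ih hy (by omega)) hx

theorem mem_nsmul_of_mem_nsmul_of_le {A : Set ℕ} (hA : ∀ x ∈ A, 1 < x → x ∈ A + A) {m h n : ℕ}
    (hn : n ∈ m • A) (hmh : m ≤ h) (hhn : h ≤ n) : n ∈ h • A := by
  induction h, hmh using Nat.le_induction with
  | base => exact hn
  | succ h _ ih => exact mem_succ_nsmul_of_mem_nsmul hA (ih (by omega)) (by omega)

end Basis

section MonochromaticSums

variable {ι : Type*} {col : ℕ → ι}

/-- The sums of distinct powers of two, at least one, whose exponents all have the same colour:
the union of the sets usually denoted `F*(W)`, for `W` ranging over the colour classes. -/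
def monochromaticSums (col : ℕ → ι) : Set ℕ :=
  {a | ∃ F : Finset ℕ, F.Nonempty ∧ (∃ k, ∀ p ∈ F, col p = k) ∧ ∑ p ∈ F, 2 ^ p = a}

theorem two_pow_mem_monochromaticSums (col : ℕ → ι) (p : ℕ) : 2 ^ p ∈ monochromaticSums col :=
  ⟨{p}, by simp, ⟨col p, by simp⟩, by simp⟩

theorem two_pow_add_two_pow_mem_monochromaticSums_iff {p q : ℕ} (hpq : p ≠ q) :
    2 ^ p + 2 ^ q ∈ monochromaticSums col ↔ col p = col q := by
  rw [← sum_pair (f := (2 ^ ·)) hpq]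
  constructor
  · rintro ⟨F, -, ⟨k, hF⟩, hsum⟩
    obtain rfl := geomSum_injective le_rfl hsum
    exact (hF p (by simp)).trans (hF q (by simp)).symm
  · exact fun h => ⟨{p, q}, by simp, ⟨col q, by simp [h]⟩, rfl⟩

theorem mem_add_self_of_mem_monochromaticSums {x : ℕ} (hx : x ∈ monochromaticSums col)
    (hx1 : 1 < x) : x ∈ monochromaticSums col + monochromaticSums col := by
  obtain ⟨F, ⟨p, hp⟩, ⟨k, hF⟩, rfl⟩ := hx
  rw [← add_sum_erase F _ hp] at hx1 ⊢
  rcases (F.erase p).eq_empty_or_nonempty with hFp | hFp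
  · rw [hFp, sum_empty, add_zero] at hx1 ⊢
    obtain ⟨q, rfl⟩ := Nat.exists_eq_succ_of_ne_zero (n := p) (by rintro rfl; simp at hx1)
    rw [pow_succ, mul_two]
    exact Set.add_mem_add (two_pow_mem_monochromaticSums col q)
      (two_pow_mem_monochromaticSums col q)
  · exact Set.add_mem_add (two_pow_mem_monochromaticSums col p)
      ⟨_, hFp, ⟨k, fun q hq => hF q (mem_of_mem_erase hq)⟩, rfl⟩

variable [Fintype ι]

theorem exists_mem_nsmul_monochromaticSums (col : ℕ → ι) (n : ℕ) :
    ∃ m ≤ Fintype.card ι, n ∈ m • monochromaticSums col := by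
  classical
  set F := n.bitIndices.toFinset
  refine ⟨#(F.image col), card_le_univ _, ?_⟩
  rw [← sum_toFinset_bitIndices_two_pow n, ← sum_const,
    ← sum_fiberwise_of_maps_to fun _ => mem_image_of_mem col]
  refine Set.finsetSum_mem_finsetSum _ _ _ fun k hk => ?_
  obtain ⟨p, hp, hpk⟩ := mem_image.1 hk
  exact ⟨{q ∈ F | col q = k}, ⟨p, by simp [hp, hpk]⟩, ⟨k, by simp⟩, rfl⟩

theorem isAsymptoticBasisOfOrder_monochromaticSums (col : ℕ → ι) :
    IsAsymptoticBasisOfOrder (monochromaticSums col) (Fintype.card ι) := by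
  rw [isAsymptoticBasisOfOrder_iff_mem_nsmul]
  filter_upwards [eventually_ge_atTop (Fintype.card ι)] with n hn
  obtain ⟨m, hm, hnm⟩ := exists_mem_nsmul_monochromaticSums col n
  exact mem_nsmul_of_mem_nsmul_of_le (fun _ => mem_add_self_of_mem_monochromaticSums) hnm hm hn

end MonochromaticSums

section Minimality

theorem card_filter_mem_le_of_forall_notMem {α β : Type*} [Fintype α] [Fintype β] [DecidableEq β]
    {f : α → β} {t : Finset β} (hcard : Fintype.card α ≤ Fintype.card β)
    (hf : ∀ y ∉ t, y ∈ Set.range f) : #{x | f x ∈ t} ≤ #t := by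
  have hcompl : #tᶜ ≤ #{x | f x ∉ t} := card_le_card_of_surjOn f fun y hy => by
    have hyt : y ∉ t := by simpa using hy
    obtain ⟨x, rfl⟩ := hf y hyt
    exact ⟨x, by simpa using hyt, rfl⟩
  have hα := card_filter_add_card_filter_not (s := (univ : Finset α)) (f · ∈ t)
  have hβ := card_add_card_compl t
  rw [card_univ] at hα
  omega

variable {ι : Type*} [Fintype ι] {col : ℕ → ι} {b : ι → ℕ} {κ : ι → ι} {i : ι} {M : ℕ}

theorem card_filter_testBit_le_one (hb : ∀ j p, (b j).testBit p → col p = κ j)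
    (hκ : ∀ k ≠ i, k ∈ Set.range κ) (hM : ∀ p < M, col p ≠ i → (∑ j, b j).testBit p) :
    ∀ p < M, #{j | (b j).testBit p} ≤ 1 := by
  classical
  -- At a position of another colour than `i` the number of digits `1` is at most two, and it is odd
  -- because no carry arrives from the lower positions.
  intro p
  induction p using Nat.strong_induction_on with
  | _ p ih =>
    intro hp
    have hle (t : Finset ι) (hit : i ∈ t) (hpt : col p ∈ t) : #{j | (b j).testBit p} ≤ #t :=
      (card_le_card fun j => by
        simp only [mem_filter_univ]
        exact fun hj => hb j p hj ▸ hpt).trans <|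
      card_filter_mem_le_of_forall_notMem le_rfl fun k hk => hκ k (by grind)
    by_cases hpi : col p = i
    · simpa using hle {i} (by simp) (by simp [hpi])
    · have htwo := (hle {i, col p} (by simp) (by simp)).trans card_le_two
      have hodd := (testBit_sum_iff_odd_card fun q hq => ih q hq (hq.trans hp)).1 (hM p hp hpi)
      grind

theorem exists_testBit_iff_eq_and_testBit_sum (hb : ∀ j p, (b j).testBit p → col p = κ j)
    (hκ : ∀ k ≠ i, k ∈ Set.range κ) (hM : ∀ p < M, col p ≠ i → (∑ j, b j).testBit p)
    (hlt : ∑ j, b j < 2 ^ M) (hi : ∃ p, col p = i ∧ (∑ j, b j).testBit p) :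
    ∃ j, ∀ p, (b j).testBit p ↔ col p = i ∧ (∑ j, b j).testBit p := by
  classical
  have lt_of_testBit {x p : ℕ} (hx : x < 2 ^ M) (hp : x.testBit p) : p < M :=
    (Nat.pow_lt_pow_iff_right one_lt_two).1 ((Nat.ge_two_pow_of_testBit hp).trans_lt hx)
  have hb_lt (j : ι) : b j < 2 ^ M := (single_le_sum (by simp) (mem_univ j)).trans_lt hlt
  have hsum : ∀ p < M, (∑ j, b j).testBit p ↔ ∃ j, (b j).testBit p := fun p hp => by
    simpa using testBit_sum_iff_exists (s := univ) fun q hq =>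
      card_filter_testBit_le_one hb hκ hM q (hq.trans_lt hp)
  have hunique : ∀ j, κ j = i → ∀ j', κ j' = i → j = j' := by
    have hcard := card_filter_mem_le_of_forall_notMem (t := {i}) le_rfl fun k hk =>
      hκ k (by simpa using hk)
    simpa [card_le_one] using hcard
  obtain ⟨p₀, hp₀i, hp₀⟩ := hi
  obtain ⟨j, hj⟩ := (hsum p₀ (lt_of_testBit hlt hp₀)).1 hp₀
  have hji : κ j = i := (hb j p₀ hj).symm.trans hp₀i
  refine ⟨j, fun p => ⟨fun hp => ⟨(hb j p hp).trans hji, ?_⟩, fun ⟨hpi, hp⟩ => ?_⟩⟩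
  · exact (hsum p (lt_of_testBit (hb_lt j) hp)).2 ⟨j, hp⟩
  · obtain ⟨j', hj'⟩ := (hsum p (lt_of_testBit hlt hp)).1 hp
    rwa [hunique j hji j' ((hb j' p hj').symm.trans hpi)]

theorem exists_eq_of_sum_eq_of_block [DecidableEq ι] {L : ℕ} {F : Finset ℕ} (hFne : F.Nonempty)
    (hFi : ∀ p ∈ F, col p = i) (hFM : F ⊆ range M) (hL : Fintype.card ι < 2 ^ L)
    (hblock : ∀ k ≠ i, ∃ t, t + L ≤ M ∧ ∀ p ∈ Set.Ico t (t + L), col p = k)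
    (hb : ∀ j, b j ∈ monochromaticSums col)
    (hsum : ∑ j, b j = ∑ p ∈ range M with col p ≠ i ∨ p ∈ F, 2 ^ p) :
    ∃ j, b j = ∑ p ∈ F, 2 ^ p := by
  have hdigit (p : ℕ) : (∑ j, b j).testBit p ↔ p < M ∧ (col p ≠ i ∨ p ∈ F) := by
    rw [hsum, testBit_sum_two_pow, mem_filter, mem_range]
  have hF_iff (p : ℕ) : (∑ q ∈ F, 2 ^ q).testBit p ↔ col p = i ∧ (∑ j, b j).testBit p := by
    rw [hdigit, testBit_sum_two_pow]
    have := @hFM p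
    grind
  choose G _ hG hGb using hb
  choose κ hκ using hG
  have hbκ (j : ι) (p : ℕ) (hp : (b j).testBit p) : col p = κ j :=
    hκ j p ((testBit_sum_two_pow _ _).1 (hGb j ▸ hp))
  have hrange : ∀ k ≠ i, k ∈ Set.range κ := fun k hk => by
    obtain ⟨t, htM, ht⟩ := hblock k hk
    obtain ⟨j, -, p, hp, hjp⟩ := exists_testBit_of_testBit_sum_of_card_lt (b := b)
      ⟨i, mem_univ i⟩ hL fun p hp =>
        (hdigit p).2 ⟨hp.2.trans_le htM, Or.inl (ht p hp ▸ hk)⟩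
    exact ⟨j, (hbκ j p hjp).symm.trans (ht p hp)⟩
  have hlt : ∑ j, b j < 2 ^ M :=
    Nat.lt_pow_two_of_testBit _ fun p hp => by simpa [hp.not_gt] using (hdigit p).not
  obtain ⟨p, hp⟩ := hFne
  obtain ⟨j, hj⟩ := exists_testBit_iff_eq_and_testBit_sum hbκ hrange
    (fun p hpM hpi => (hdigit p).2 ⟨hpM, Or.inl hpi⟩) hlt
    ⟨p, (hF_iff p).1 ((testBit_sum_two_pow F p).2 hp)⟩
  exact ⟨j, Nat.eq_of_testBit_eq fun p => Bool.eq_iff_iff.2 ((hj p).trans (hF_iff p).symm)⟩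

theorem isMinimalAsymptoticBasisOfOrder_monochromaticSums {L : ℕ} (hL : Fintype.card ι < 2 ^ L)
    (hblock : ∀ k, ∃ t, ∀ p ∈ Set.Ico t (t + L), col p = k)
    (hne : ∀ k, ∃ᶠ p in atTop, col p ≠ k) :
    IsMinimalAsymptoticBasisOfOrder (monochromaticSums col) (Fintype.card ι) := by
  classical
  refine ⟨isAsymptoticBasisOfOrder_monochromaticSums col, fun B hBA hB => ?_⟩
  obtain ⟨hBA, a, ⟨F, hFne, ⟨i, hFi⟩, rfl⟩, haB⟩ := Set.ssubset_iff_exists.1 hBA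
  rw [isAsymptoticBasisOfOrder_iff_mem_nsmul] at hB
  obtain ⟨N, hN⟩ := eventually_atTop.1 hB
  choose t ht using hblock
  obtain ⟨q, hqN, hqi⟩ := frequently_atTop.1 (hne i) N
  obtain ⟨M, hqM, htM, hFM⟩ : ∃ M, q < M ∧ (∀ k, t k + L ≤ M) ∧ ∀ p ∈ F, p < M :=
    ((eventually_gt_atTop q).and <| (eventually_all.2 fun k => eventually_ge_atTop (t k + L)).and <|
      (eventually_all_finset F).2 fun p _ => eventually_gt_atTop p).exists
  set n := ∑ p ∈ range M with col p ≠ i ∨ p ∈ F, 2 ^ p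
  have hNn : N ≤ n := calc
    N ≤ 2 ^ q := hqN.trans q.lt_two_pow_self.le
    _ ≤ n := single_le_sum_of_canonicallyOrdered (f := (2 ^ ·)) (by simp [hqM, hqi])
  obtain ⟨b, hbB, hbn⟩ : ∃ b : ι → ℕ, (∀ j, b j ∈ B) ∧ ∑ j, b j = n := by
    simpa [← card_univ, ← sum_const, Set.mem_fintype_sum] using hN n hNn
  obtain ⟨j, hj⟩ := exists_eq_of_sum_eq_of_block hFne hFi (fun p hp => mem_range.2 (hFM p hp)) hL
    (fun k _ => ⟨t k, htM k, ht k⟩) (fun j => hBA (hbB j)) hbn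
  exact haB (hj ▸ hbB j)

end Minimality

section Colourings

theorem exists_forall_frequently_eq (ι : Type*) [Nonempty ι] [Countable ι] :
    ∃ c : ℕ → ι, ∀ k, ∃ᶠ m in atTop, c m = k := by
  obtain ⟨f, hf⟩ := exists_surjective_nat (ι × ℕ)
  refine ⟨fun m => (f m).1, fun k => Nat.frequently_atTop_iff_infinite.2 ?_⟩
  refine Set.infinite_of_injective_forall_mem (f := fun m : ℕ => Function.surjInv hf (k, m))
    ((Function.injective_surjInv hf).comp (Prod.mk_right_injective k)) fun m => ?_
  simp [Function.surjInv_eq hf]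

theorem uncountable_arrow {α β : Type*} [Infinite α] [Nontrivial β] : Uncountable (α → β) := by
  rw [← Cardinal.aleph0_lt_mk_iff, Cardinal.mk_arrow]
  exact (Cardinal.aleph0_le_lift.2 (Cardinal.aleph0_le_mk α)).trans_lt
    (Cardinal.cantor' _ (Cardinal.one_lt_lift_iff.2 (Cardinal.one_lt_iff_nontrivial.2 ‹_›)))

variable {ι : Type*}

theorem isMinimalAsymptoticBasisOfOrder_monochromaticSums_div [Fintype ι] [Nontrivial ι] {L : ℕ}
    (hL : Fintype.card ι < 2 ^ L) {c : ℕ → ι} (hc : ∀ k, ∃ᶠ m in atTop, c m = k) :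
    IsMinimalAsymptoticBasisOfOrder (monochromaticSums fun p => c (p / L)) (Fintype.card ι) := by
  have hLpos : 0 < L := Nat.pos_of_ne_zero <| by
    rintro rfl
    simp at hL
  refine isMinimalAsymptoticBasisOfOrder_monochromaticSums hL (fun k => ?_) fun k => ?_
  · obtain ⟨m, rfl⟩ := (hc k).exists
    refine ⟨m * L, fun p hp => ?_⟩
    rw [Nat.div_eq_of_lt_le hp.1 (by simpa [add_mul] using hp.2)]
  · obtain ⟨k', hk'⟩ := exists_ne k
    refine (tendsto_id.atTop_mul_const' hLpos).frequently ((hc k').mono fun m hm => ?_)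
    simpa [hLpos, hm] using hk'

/-- The sequence whose even-indexed terms are those of `c` and whose odd-indexed terms are those
of `d`. A colouring of the positions is built from a fixed `c`, which makes every colour occur
infinitely often, and an arbitrary `d`. -/
def interleave (c d : ℕ → ι) : ℕ → ι :=
  Sum.elim c d ∘ Equiv.natSumNatEquivNat.symm

theorem interleave_two_mul (c d : ℕ → ι) (m : ℕ) : interleave c d (2 * m) = c m :=
  congrArg (Sum.elim c d) (Equiv.natSumNatEquivNat.symm_apply_apply (Sum.inl m))

theorem interleave_two_mul_add_one (c d : ℕ → ι) (m : ℕ) : interleave c d (2 * m + 1) = d m :=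
  congrArg (Sum.elim c d) (Equiv.natSumNatEquivNat.symm_apply_apply (Sum.inr m))

theorem frequently_interleave_eq {c : ℕ → ι} {k : ι} (hc : ∃ᶠ m in atTop, c m = k) (d : ℕ → ι) :
    ∃ᶠ m in atTop, interleave c d m = k :=
  (tendsto_id.const_mul_atTop' two_pos).frequently <| hc.mono fun m hm =>
    (interleave_two_mul c d m).trans hm

theorem monochromaticSums_interleave_div_injective {L : ℕ} (hL : 0 < L) {c : ℕ → ι}
    (hc : c.Surjective) :
    Function.Injective fun d : ℕ → ι => monochromaticSums fun p => interleave c d (p / L) := by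
  have mem_iff (d : ℕ → ι) (j m : ℕ) : 2 ^ (L * (2 * m)) + 2 ^ (L * (2 * j + 1)) ∈
      monochromaticSums (fun p => interleave c d (p / L)) ↔ c m = d j := by
    rw [two_pow_add_two_pow_mem_monochromaticSums_iff
      ((mul_right_injective₀ hL.ne').ne (by omega)), Nat.mul_div_cancel_left _ hL,
      Nat.mul_div_cancel_left _ hL, interleave_two_mul, interleave_two_mul_add_one]
  refine fun d d' hdd' => funext fun j => ?_
  obtain ⟨m, hm⟩ := hc (d j)
  exact hm.symm.trans <| (mem_iff d' j m).1 <| Set.ext_iff.1 hdd' _ |>.1 <| (mem_iff d j m).2 hm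

end Colourings

theorem hartter_uncountably_many_minimal_bases (h : ℕ) (hh : 2 ≤ h) :
    ¬ {A : Set ℕ | IsMinimalAsymptoticBasisOfOrder A h}.Countable := by
  have : Nontrivial (Fin h) := Fin.nontrivial_iff_two_le.2 hh
  obtain ⟨c, hc⟩ := exists_forall_frequently_eq (Fin h)
  let A (d : ℕ → Fin h) : Set ℕ := monochromaticSums fun p => interleave c d (p / h)
  have hA_inj : A.Injective :=
    monochromaticSums_interleave_div_injective (by omega) fun k => (hc k).exists
  have hA_min (d : ℕ → Fin h) : IsMinimalAsymptoticBasisOfOrder (A d) h := by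
    simpa using isMinimalAsymptoticBasisOfOrder_monochromaticSums_div
      (by simpa using h.lt_two_pow_self) fun k => frequently_interleave_eq (hc k) d
  have : Uncountable (ℕ → Fin h) := uncountable_arrow
  rw [← Set.countable_coe_iff, not_countable_iff]
  exact (hA_inj.codRestrict hA_min).uncountable
end

section
/- (Erdős–Nathanson) For every integer h ≥ 2, there exists a minimal asymptotic basis A of order h whose asymptotic density exists and equals 1/h, i.e., lim_{n→∞} A(n)/n = 1/h. -/
open Pointwise Filter

/-!
Write `h = p + 1` and fix a large base `b`. The basis consists of the integers `1 + h * m`, for all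
`m` outside a removed set, together with the multiples by `h` of the sparse sequence
`0, b, b ^ 2, …`. Modulo `h`, a sum of `h` elements equal to `1 + h * n` uses exactly one element of
the first kind, so it amounts to a representation of `n` as an unremoved `m` plus `p` sparse terms.

The removed set is built in stages. Stage `k` chooses a critical integer of the form
`target + p * (sparse term)` and removes every `m` that occurs in another representation of it, so
that the target and the sparse term become indispensable for it. Every unremoved `m` is a target
infinitely often, and every sparse term is used infinitely often, which gives minimality.

Few integers are removed: a removed integer is determined by `k` and `p` indices, all logarithmic
in its size, so the density remains `1 / h`. The integers removed at different stages are far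
apart, and at a single stage the difference of two of them is a difference of two sums of `p`
sparse terms, which is restricted modulo `b - 1`. Hence decreasing a removed integer by `p * b` or
by `p + 1` leads out of the removed set (in the case of `p * b` unless it equals the critical
integer, which is represented anyway), and the set is still an asymptotic basis.
-/

namespace ErdosNathanson

/-- The asymptotic density of `A` exists and equals `d`. -/
def HasDensity (A : Set ℕ) (d : ℝ) : Prop :=
  Tendsto (fun n : ℕ => (countingFn A n : ℝ) / n) atTop (nhds d)

section Density

variable {A B : Set ℕ} {d : ℝ}

lemma countingFn_mono (hAB : A ⊆ B) (n : ℕ) : countingFn A n ≤ countingFn B n :=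
  Set.ncard_le_ncard (Set.inter_subset_inter_left _ hAB)
    ((Set.finite_Icc 1 n).subset Set.inter_subset_right)

lemma countingFn_inter_add_countingFn_sdiff (A B : Set ℕ) (n : ℕ) :
    countingFn (A ∩ B) n + countingFn (A \ B) n = countingFn A n := by
  rw [countingFn, countingFn, countingFn, Set.inter_right_comm, Set.sdiff_inter_right_comm]
  exact Set.ncard_inter_add_ncard_sdiff_eq_ncard _ _
    ((Set.finite_Icc 1 n).subset Set.inter_subset_right)

lemma HasDensity.mono_zero (hB : HasDensity B 0) (hAB : A ⊆ B) : HasDensity A 0 := by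
  refine squeeze_zero (fun _ => by positivity) (fun n => ?_) hB
  gcongr
  exact countingFn_mono hAB n

lemma HasDensity.sdiff_zero (hA : HasDensity A d) (hB : HasDensity B 0) :
    HasDensity (A \ B) d := by
  have hAB : HasDensity (A ∩ B) 0 := hB.mono_zero Set.inter_subset_right
  refine (sub_zero d ▸ Tendsto.sub hA hAB).congr fun n => ?_
  rw [← countingFn_inter_add_countingFn_sdiff A B n]
  push_cast
  ring

lemma HasDensity.union_zero (hA : HasDensity A d) (hB : HasDensity B 0) :
    HasDensity (A ∪ B) d := by
  have hBA : HasDensity (B \ A) 0 := hB.mono_zero Set.sdiff_subset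
  refine (add_zero d ▸ Tendsto.add hA hBA).congr fun n => ?_
  rw [← countingFn_inter_add_countingFn_sdiff (A ∪ B) A n, Set.union_inter_cancel_left,
    Set.union_sdiff_left]
  push_cast
  ring

lemma hasDensity_of_abs_sub_le {C : ℝ} (hC : ∀ n : ℕ, |countingFn A n - d * n| ≤ C) :
    HasDensity A d := by
  refine tendsto_iff_norm_sub_tendsto_zero.mpr <|
    squeeze_zero' (.of_forall fun _ => norm_nonneg _) ?_ (tendsto_const_div_atTop_nhds_zero_nat C)
  filter_upwards [eventually_ne_atTop 0] with n hn
  rw [div_sub' (Nat.cast_ne_zero.mpr hn), mul_comm, norm_div, Real.norm_natCast, Real.norm_eq_abs]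
  gcongr
  exact hC n

lemma hasDensity_modEq {q : ℕ} (hq : 0 < q) (v : ℕ) :
    HasDensity {x | x ≡ v [MOD q]} (1 / q) := by
  refine hasDensity_of_abs_sub_le (C := 1) fun n => ?_
  have hset : {x | x ≡ v [MOD q]} ∩ Set.Icc 1 n =
      ((Finset.Ioc 0 n).filter (· ≡ v [MOD q]) : Finset ℕ) := by
    ext x
    simp [Nat.one_le_iff_ne_zero, Nat.pos_iff_ne_zero, and_comm]
  have hdiff : ((n : ℚ) - v) / q - ((0 : ℕ) - v) / q = 1 / q * n := by
    push_cast
    ring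
  have hfloor : ⌊(((0 : ℕ) : ℚ) - v) / q⌋ ≤ ⌊((n : ℚ) - v) / q⌋ :=
    Int.floor_mono (sub_nonneg.mp (hdiff ▸ by positivity))
  have hcount : (countingFn {x | x ≡ v [MOD q]} n : ℚ) =
      ⌊((n : ℚ) - v) / q⌋ - ⌊(((0 : ℕ) : ℚ) - v) / q⌋ := by
    rw [countingFn, hset, Set.ncard_coe_finset]
    exact_mod_cast (Nat.Ioc_filter_modEq_card _ _ hq v).trans (max_eq_left (by lia))
  have hbound : |(countingFn {x | x ≡ v [MOD q]} n : ℚ) - 1 / q * n| ≤ 1 := by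
    rw [hcount, ← hdiff, abs_le]
    constructor <;> linarith [Int.floor_le (((n : ℚ) - v) / q),
      Int.lt_floor_add_one (((n : ℚ) - v) / q), Int.floor_le ((((0 : ℕ) : ℚ) - v) / q),
      Int.lt_floor_add_one ((((0 : ℕ) : ℚ) - v) / q)]
  simpa using (Rat.cast_le (K := ℝ)).mpr hbound

lemma tendsto_log_add_one_pow_div (k : ℕ) :
    Tendsto (fun n : ℕ => ((Nat.log 2 n + 1 : ℕ) : ℝ) ^ k / n) atTop (nhds 0) := by
  have hlog : Tendsto (fun n : ℕ => Nat.log 2 n + 1) atTop atTop :=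
    tendsto_atTop_atTop_of_monotone (fun _ _ h => by gcongr) fun b =>
      ⟨2 ^ b, by rw [Nat.log_pow one_lt_two]; exact b.le_succ⟩
  have hlim := ((tendsto_pow_const_div_const_pow_of_one_lt k one_lt_two).comp hlog).const_mul 2
  rw [mul_zero] at hlim
  refine squeeze_zero' (.of_forall fun n => by positivity) ?_ hlim
  filter_upwards [eventually_ne_atTop 0] with n hn
  have hpow : (2 : ℝ) ^ Nat.log 2 n ≤ n := mod_cast Nat.pow_log_le_self 2 hn
  calc ((Nat.log 2 n + 1 : ℕ) : ℝ) ^ k / n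
      ≤ ((Nat.log 2 n + 1 : ℕ) : ℝ) ^ k / 2 ^ Nat.log 2 n := by gcongr
    _ = 2 * (((Nat.log 2 n + 1 : ℕ) : ℝ) ^ k / 2 ^ (Nat.log 2 n + 1)) := by
      rw [pow_succ]
      field_simp

lemma hasDensity_zero_of_two_pow_le {ι : Type*} [Finite ι] (f : (ι → ℕ) → ℕ)
    (hf : ∀ a ∈ A, 0 < a → ∃ v, (∀ j, 2 ^ v j ≤ a) ∧ f v = a) : HasDensity A 0 := by
  classical
  cases nonempty_fintype ι
  refine squeeze_zero (fun n => by positivity) (fun n => ?_)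
    (tendsto_log_add_one_pow_div (Fintype.card ι))
  gcongr
  have hsub : A ∩ Set.Icc 1 n ⊆
      ((Fintype.piFinset fun _ : ι => Finset.range (Nat.log 2 n + 1)).image f : Finset ℕ) := by
    rintro a ⟨haA, ha, han⟩
    obtain ⟨v, hv, rfl⟩ := hf a haA ha
    refine Finset.mem_image_of_mem f (Fintype.mem_piFinset.mpr fun j => ?_)
    exact Finset.mem_range_succ_iff.mpr (Nat.le_log_of_pow_le one_lt_two ((hv j).trans han))
  have hcard : countingFn A n ≤ (Nat.log 2 n + 1) ^ Fintype.card ι := by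
    refine (Set.ncard_le_ncard hsub (Finset.finite_toSet _)).trans ?_
    rw [Set.ncard_coe_finset]
    exact Finset.card_image_le.trans (by simp [Fintype.card_piFinset])
  exact_mod_cast hcard

end Density

section Representations

variable {A M T : Set ℕ} {h k l m n p q : ℕ}

lemma isMinimalAsymptoticBasisOfOrder_of_forall_exists_mem (hA : IsAsymptoticBasisOfOrder A h)
    (hmem : ∀ a ∈ A, ∀ N, ∃ n ≥ N, ∀ c : Fin h → ℕ, (∀ i, c i ∈ A) → ∑ i, c i = n → ∃ i, c i = a) :
    IsMinimalAsymptoticBasisOfOrder A h := by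
  refine ⟨hA, fun B hB hbasis => ?_⟩
  obtain ⟨hBA, a, haA, haB⟩ := Set.ssubset_iff_exists.mp hB
  obtain ⟨N, hN⟩ := eventually_atTop.mp hbasis
  obtain ⟨n, hn, hforced⟩ := hmem a haA N
  obtain ⟨c, hc, hsum⟩ := hN n hn
  obtain ⟨i, rfl⟩ := hforced c (fun i => hBA (hc i)) hsum
  exact haB (hc i)

/-- `n` is a sum of exactly `k` elements of `A`. This is not phrased as membership in the sumset
`k • A`, since that notation could also denote a dilate of `A`. -/
def IsSumOf (A : Set ℕ) (k n : ℕ) : Prop :=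
  ∃ c : Fin k → ℕ, (∀ i, c i ∈ A) ∧ ∑ i, c i = n

lemma IsSumOf.add (hm : IsSumOf A k m) (hn : IsSumOf A l n) : IsSumOf A (k + l) (m + n) := by
  obtain ⟨c, hc, rfl⟩ := hm
  obtain ⟨d, hd, rfl⟩ := hn
  refine ⟨Fin.append c d, fun i => ?_, by simp [Fin.sum_univ_add]⟩
  induction i using Fin.addCases with
  | left i => simpa using hc i
  | right i => simpa using hd i

lemma isSumOf_mul {a : ℕ} (ha : a ∈ A) (k : ℕ) : IsSumOf A k (k * a) :=
  ⟨fun _ => a, fun _ => ha, by simp⟩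

lemma isSumOf_one {a : ℕ} (ha : a ∈ A) : IsSumOf A 1 a := by
  simpa using isSumOf_mul ha 1

/-- The set whose elements are the integers `1 + q * m` with `m ∈ M` and the integers `q * t` with
`t ∈ T`; for `1 < q` these are its parts in the residue classes of `1` and `0` modulo `q`. -/
def residueUnion (q : ℕ) (M T : Set ℕ) : Set ℕ :=
  (fun m => 1 + q * m) '' M ∪ (fun t => q * t) '' T

lemma one_add_mul_mem_residueUnion (hm : m ∈ M) : 1 + q * m ∈ residueUnion q M T :=
  Or.inl (Set.mem_image_of_mem _ hm)

lemma mul_mem_residueUnion {t : ℕ} (ht : t ∈ T) : q * t ∈ residueUnion q M T :=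
  Or.inr (Set.mem_image_of_mem _ ht)

lemma isSumOf_residueUnion_one_add_mul {t : ℕ} (hm : m ∈ M) (ht : t ∈ T) :
    IsSumOf (residueUnion (p + 1) M T) (p + 1) (1 + (p + 1) * (m + p * t)) := by
  convert (isSumOf_mul (mul_mem_residueUnion ht) p).add
    (isSumOf_one (one_add_mul_mem_residueUnion hm)) using 1
  ring

lemma isSumOf_residueUnion_add_two_add_mul {r x y : ℕ} (hr : r < p) (hx : x ∈ M) (hy : y ∈ M)
    (hM : 0 ∈ M) (hT : 0 ∈ T) :
    IsSumOf (residueUnion (p + 1) M T) (p + 1) (r + 2 + (p + 1) * (x + y)) := by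
  obtain ⟨s, rfl⟩ := Nat.exists_eq_add_of_lt hr
  have hxy := (isSumOf_one (one_add_mul_mem_residueUnion (q := r + s + 1 + 1) (T := T) hx)).add
    (isSumOf_one (one_add_mul_mem_residueUnion hy))
  convert (hxy.add (isSumOf_mul (one_add_mul_mem_residueUnion hM) r)).add
    (isSumOf_mul (mul_mem_residueUnion hT) s) using 1 <;> ring

lemma sum_eq_one_of_modEq_card {ι : Type*} [Fintype ι] {r : ι → ℕ} (hr : ∀ i, r i ≤ 1)
    (hι : 1 < Fintype.card ι) (hsum : ∑ i, r i ≡ 1 [MOD Fintype.card ι]) : ∑ i, r i = 1 := by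
  have hle : ∑ i, r i ≤ Fintype.card ι := by
    simpa using Finset.sum_le_card_nsmul Finset.univ r 1 fun i _ => hr i
  rcases hle.lt_or_eq with hlt | heq
  · exact hsum.eq_of_lt_of_lt hlt hι
  · simp [heq, Nat.ModEq, Nat.mod_eq_of_lt hι] at hsum

lemma mod_le_one_of_mem_residueUnion {a : ℕ} (ha : a ∈ residueUnion q M T) : a % q ≤ 1 := by
  rcases ha with ⟨m, -, rfl⟩ | ⟨t, -, rfl⟩
  · simpa using Nat.mod_le 1 q
  · simp

lemma exists_eq_mul_of_mem_residueUnion (hq : 1 < q) {a : ℕ} (ha : a ∈ residueUnion q M T)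
    (hmod : a % q = 0) : ∃ t ∈ T, a = q * t := by
  rcases ha with ⟨m, -, rfl⟩ | ⟨t, ht, rfl⟩
  · simp [Nat.mod_eq_of_lt hq] at hmod
  · exact ⟨t, ht, rfl⟩

lemma exists_eq_one_add_mul_of_mem_residueUnion {a : ℕ} (ha : a ∈ residueUnion q M T)
    (hmod : a % q ≠ 0) : ∃ m ∈ M, a = 1 + q * m := by
  rcases ha with ⟨m, hm, rfl⟩ | ⟨t, -, rfl⟩
  · exact ⟨m, hm, rfl⟩
  · simp at hmod

lemma exists_add_sum_eq_of_sum_residueUnion_eq (hp : 0 < p) {a : Fin (p + 1) → ℕ}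
    (ha : ∀ i, a i ∈ residueUnion (p + 1) M T) (hsum : ∑ i, a i = 1 + (p + 1) * n) :
    ∃ i₀, ∃ m ∈ M, ∃ t : Fin p → ℕ, (∀ j, t j ∈ T) ∧ a i₀ = 1 + (p + 1) * m ∧
      (∀ j, a (i₀.succAbove j) = (p + 1) * t j) ∧ m + ∑ j, t j = n := by
  have hone : ∑ i, a i % (p + 1) = 1 := by
    refine sum_eq_one_of_modEq_card (fun i => mod_le_one_of_mem_residueUnion (ha i))
      (by simpa using hp) ?_
    rw [Fintype.card_fin, Nat.ModEq, ← Finset.sum_nat_mod, hsum, Nat.add_mul_mod_self_left]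
  obtain ⟨i₀, -, hi₀⟩ : ∃ i ∈ Finset.univ, a i % (p + 1) ≠ 0 :=
    Finset.exists_ne_zero_of_sum_ne_zero (by lia)
  rw [Fin.sum_univ_succAbove _ i₀] at hone hsum
  have hrest : ∀ j, a (i₀.succAbove j) % (p + 1) = 0 := by
    simpa using (show ∑ j, a (i₀.succAbove j) % (p + 1) = 0 by lia)
  obtain ⟨m, hm, hmi⟩ := exists_eq_one_add_mul_of_mem_residueUnion (ha i₀) hi₀
  choose t ht hta using fun j => exists_eq_mul_of_mem_residueUnion (by lia) (ha _) (hrest j)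
  refine ⟨i₀, m, hm, t, ht, hmi, hta, ?_⟩
  simp only [hta, hmi, ← Finset.mul_sum, add_assoc, ← mul_add] at hsum
  exact Nat.eq_of_mul_eq_mul_left p.succ_pos (Nat.add_left_cancel hsum)

lemma hasDensity_residueUnion (hq : 1 < q) (hM : HasDensity ((fun m => 1 + q * m) '' Mᶜ) 0)
    (hT : HasDensity ((fun t => q * t) '' T) 0) : HasDensity (residueUnion q M T) (1 / q) := by
  have hinj : Function.Injective fun m => 1 + q * m := fun x y hxy =>
    Nat.eq_of_mul_eq_mul_left (by lia) (Nat.add_left_cancel hxy)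
  have hrange : Set.range (fun m => 1 + q * m) = {x | x ≡ 1 [MOD q]} := by
    ext x
    constructor
    · rintro ⟨m, rfl⟩
      simp [Nat.ModEq]
    · intro hx
      have hmod : x % q = 1 := Nat.mod_eq_of_modEq hx hq
      exact ⟨x / q, by simpa [hmod] using Nat.mod_add_div x q⟩
  have himage : (fun m => 1 + q * m) '' M =
      {x | x ≡ 1 [MOD q]} \ (fun m => 1 + q * m) '' Mᶜ := by
    rw [← hrange, ← Set.image_compl_eq_range_sdiff_image hinj, compl_compl]
  rw [residueUnion, himage]
  exact ((hasDensity_modEq (by lia) 1).sdiff_zero hM).union_zero hT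

end Representations

section SparseSequence

variable {ι : Type*} [Fintype ι] {b p : ℕ}

lemma sum_add_le_of_le {f : ι → ℕ} {B : ℕ} (hf : ∀ i, f i ≤ B) (j : ι) :
    ∑ i, f i + B ≤ Fintype.card ι * B + f j := by
  classical
  have hrest := Finset.sum_le_card_nsmul (Finset.univ.erase j) f B fun i _ => hf i
  rw [Finset.card_erase_of_mem (Finset.mem_univ j), Finset.card_univ, smul_eq_mul] at hrest
  have hcard : (Fintype.card ι - 1) * B + B = Fintype.card ι * B := by
    rw [← Nat.succ_mul, Nat.succ_eq_add_one, Nat.sub_add_cancel (Fintype.card_pos_iff.mpr ⟨j⟩)]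
  have hsplit := Finset.add_sum_erase Finset.univ f (Finset.mem_univ j)
  lia

lemma le_of_sum_lt_succ {t : ℕ → ℕ} (ht : StrictMono t) {c : ι → ℕ} {k : ℕ}
    (hsum : ∑ j, t (c j) < t (k + 1)) (j : ι) : c j ≤ k :=
  Nat.lt_succ_iff.mp <| ht.lt_iff_lt.mp <|
    (Finset.single_le_sum (f := fun j => t (c j)) (fun _ _ => Nat.zero_le _)
      (Finset.mem_univ j)).trans_lt hsum

lemma eq_const_of_sum_eq_card_mul {t : ℕ → ℕ} (ht : StrictMono t) {c : ι → ℕ} {i : ℕ}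
    (hgap : Fintype.card ι * t i < t (i + 1)) (hsum : ∑ j, t (c j) = Fintype.card ι * t i) :
    c = fun _ => i := by
  have hle : ∀ j, c j ≤ i := le_of_sum_lt_succ ht (hsum.trans_lt hgap)
  have heq : ∑ j, t (c j) = ∑ _j : ι, t i := by simp [hsum]
  rw [Finset.sum_eq_sum_iff_of_le fun j _ => ht.monotone (hle j)] at heq
  exact funext fun j => ht.injective (heq j (Finset.mem_univ j))

/-- The sparse sequence `0, b, b ^ 2, b ^ 3, …`. -/
def sparse (b i : ℕ) : ℕ := if i = 0 then 0 else b ^ i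

@[simp]
lemma sparse_zero : sparse b 0 = 0 := if_pos rfl

lemma sparse_of_ne_zero {i : ℕ} (hi : i ≠ 0) : sparse b i = b ^ i := if_neg hi

lemma sparse_le_pow (i : ℕ) : sparse b i ≤ b ^ i := by
  unfold sparse
  split_ifs <;> simp

lemma mul_sparse_lt_sparse_succ (hpb : p < b) (i : ℕ) : p * sparse b i < sparse b (i + 1) := by
  rw [sparse_of_ne_zero i.succ_ne_zero, pow_succ']
  calc p * sparse b i ≤ p * b ^ i := Nat.mul_le_mul_left p (sparse_le_pow i)
    _ < b * b ^ i := Nat.mul_lt_mul_of_pos_right hpb (Nat.pow_pos (by lia))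

lemma sparse_strictMono (hb : 1 < b) : StrictMono (sparse b) :=
  strictMono_nat_of_lt_succ fun i => by simpa using mul_sparse_lt_sparse_succ hb i

lemma sparse_le_pow_of_le (hb : 1 < b) {i k : ℕ} (hik : i ≤ k) : sparse b i ≤ b ^ k :=
  (sparse_le_pow i).trans (Nat.pow_le_pow_right (by lia) hik)

/-- Casting out `b - 1`. -/
lemma sum_sparse_modEq (hb : 0 < b) (c : ι → ℕ) :
    ∑ j, sparse b (c j) ≡ (Finset.univ.filter fun j => c j ≠ 0).card [MOD b - 1] := by
  rw [Finset.card_filter]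
  refine Nat.ModEq.sum fun j _ => ?_
  by_cases hj : c j = 0
  · simp [hj, Nat.ModEq.refl]
  · have hbase : b ≡ 1 [MOD b - 1] := ((Nat.modEq_iff_dvd' hb).mpr dvd_rfl).symm
    simpa [sparse_of_ne_zero, hj] using hbase.pow (c j)

end SparseSequence

section Construction

variable {b j k m p : ℕ}

/-- The index `i` such that `sparse b i` is protected at stage `k`: large at even stages, and
taking every value infinitely often at odd stages. -/
def stageIndex (k : ℕ) : ℕ := if Even k then k + 1 else (k / 2).unpair.1

/-- The integer protected at stage `k`: large at odd stages, and taking every value infinitely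
often at even stages. -/
def stageTarget (p b k : ℕ) : ℕ := if Even k then (k / 2).unpair.1 else (p + 1) * b ^ (k + 1)

/-- The integer whose representation as an unremoved integer plus `p` terms of `sparse b` becomes
unique at stage `k`. -/
def critical (p b k : ℕ) : ℕ := stageTarget p b k + p * sparse b (stageIndex k)

/-- The integers occurring in the undesired representations of `critical p b k`. -/
def obstruction (p b k : ℕ) : Set ℕ :=
  {m | ∃ c : Fin p → ℕ, (c ≠ fun _ => stageIndex k) ∧ m + ∑ i, sparse b (c i) = critical p b k}

/-- Stage `k` is carried out only if no earlier stage has removed its target. -/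
def IsActive (p b k : ℕ) : Prop :=
  ∀ j < k, IsActive p b j → stageTarget p b k ∉ obstruction p b j

/-- The integers removed at some active stage. -/
def removed (p b : ℕ) : Set ℕ := {m | ∃ k, IsActive p b k ∧ m ∈ obstruction p b k}

lemma stageIndex_two_mul (k : ℕ) : stageIndex (2 * k) = 2 * k + 1 := by simp [stageIndex]

lemma stageIndex_two_mul_add_one (k : ℕ) : stageIndex (2 * k + 1) = k.unpair.1 := by
  simp [stageIndex, Nat.mul_add_div]

lemma stageTarget_two_mul (k : ℕ) : stageTarget p b (2 * k) = k.unpair.1 := by simp [stageTarget]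

lemma stageTarget_two_mul_add_one (k : ℕ) :
    stageTarget p b (2 * k + 1) = (p + 1) * b ^ (2 * k + 2) := by
  simp [stageTarget]

lemma stageIndex_le (k : ℕ) : stageIndex k ≤ k + 1 := by
  unfold stageIndex
  have := Nat.unpair_left_le (k / 2)
  split_ifs <;> lia

lemma stageTarget_le (hb : 1 < b) (k : ℕ) : stageTarget p b k ≤ (p + 1) * b ^ (k + 1) := by
  unfold stageTarget
  split_ifs
  · calc (k / 2).unpair.1 ≤ k + 1 := by have := Nat.unpair_left_le (k / 2); lia
      _ ≤ b ^ (k + 1) := (Nat.lt_pow_self hb).le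
      _ ≤ (p + 1) * b ^ (k + 1) := Nat.le_mul_of_pos_left _ p.succ_pos
  · exact le_rfl

lemma stageTarget_le_critical (k : ℕ) : stageTarget p b k ≤ critical p b k := Nat.le_add_right _ _

lemma critical_le (hb : 1 < b) (k : ℕ) : critical p b k ≤ (2 * p + 1) * b ^ (k + 1) :=
  calc critical p b k ≤ (p + 1) * b ^ (k + 1) + p * b ^ (k + 1) := by
        unfold critical
        gcongr
        · exact stageTarget_le hb k
        · exact sparse_le_pow_of_le hb (stageIndex_le k)
    _ = (2 * p + 1) * b ^ (k + 1) := by ring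

lemma le_critical (hp : 0 < p) (hb : 1 < b) (k : ℕ) : k ≤ critical p b k := by
  refine ((Nat.lt_succ_self k).trans (Nat.lt_pow_self hb)).le.trans ?_
  rcases k.even_or_odd' with ⟨l, rfl | rfl⟩
  · rw [critical, stageIndex_two_mul, sparse_of_ne_zero (by lia)]
    exact (Nat.le_mul_of_pos_left _ hp).trans (Nat.le_add_left _ _)
  · refine le_trans ?_ (stageTarget_le_critical _)
    rw [stageTarget_two_mul_add_one]
    exact Nat.le_mul_of_pos_left _ p.succ_pos

lemma le_critical_of_mem_obstruction (hm : m ∈ obstruction p b k) : m ≤ critical p b k := by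
  obtain ⟨c, -, hc⟩ := hm
  lia

lemma index_le_of_sum_le_critical (hb : 2 * p + 1 < b) {c : Fin p → ℕ}
    (hc : ∑ i, sparse b (c i) ≤ critical p b k) (i : Fin p) : c i ≤ k + 1 := by
  refine le_of_sum_lt_succ (sparse_strictMono (b := b) (by lia)) ?_ i
  rw [sparse_of_ne_zero (by lia), pow_succ']
  calc ∑ i, sparse b (c i) ≤ (2 * p + 1) * b ^ (k + 1) := hc.trans (critical_le (by lia) k)
    _ < b * b ^ (k + 1) := Nat.mul_lt_mul_of_pos_right hb (Nat.pow_pos (by lia))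

/-- An undesired representation of a critical integer falls short of the desired one either in
one of its sparse terms, at even stages, or by using sparse terms at all, at odd stages. -/
lemma pow_succ_le_add_pow_of_mem_obstruction (hb : 2 * p + 1 < b) (hm : m ∈ obstruction p b k) :
    b ^ (k + 1) ≤ m + b ^ k := by
  obtain ⟨c, hne, hc⟩ := hm
  have hle : ∀ i, c i ≤ k + 1 := index_le_of_sum_le_critical hb (by lia)
  have hterm : ∀ i, sparse b (c i) ≤ b ^ (k + 1) := fun i => sparse_le_pow_of_le (by lia) (hle i)
  rcases k.even_or_odd' with ⟨l, rfl | rfl⟩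
  · obtain ⟨i, hi⟩ := Function.ne_iff.mp hne
    rw [stageIndex_two_mul] at hi
    have hsmall : sparse b (c i) ≤ b ^ (2 * l) :=
      sparse_le_pow_of_le (by lia) (Nat.lt_succ_iff.mp ((hle i).lt_of_ne hi))
    have hsum := sum_add_le_of_le hterm i
    rw [critical, stageIndex_two_mul, sparse_of_ne_zero (by lia)] at hc
    rw [Fintype.card_fin] at hsum
    lia
  · have hsum : ∑ i, sparse b (c i) ≤ p * b ^ (2 * l + 1 + 1) := by
      simpa using Finset.sum_le_card_nsmul Finset.univ _ _ fun i _ => hterm i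
    rw [critical, stageTarget_two_mul_add_one, Nat.succ_mul] at hc
    lia

/-- Obstructions of different stages lie in windows separated by large gaps. -/
lemma critical_add_le_of_mem_obstruction (hb : 3 * (p + 1) ≤ b) (hjk : j < k)
    (hm : m ∈ obstruction p b k) : critical p b j + (p + 1) * b ≤ m := by
  have hpow : b ^ (j + 1) ≤ b ^ k := Nat.pow_le_pow_right (by lia) hjk
  have hbase : b ≤ b ^ k := Nat.le_self_pow (by lia) b
  have hwindow : 3 * (p + 1) * b ^ k ≤ m + b ^ k :=
    calc 3 * (p + 1) * b ^ k ≤ b * b ^ k := Nat.mul_le_mul_right _ hb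
      _ = b ^ (k + 1) := (pow_succ' b k).symm
      _ ≤ m + b ^ k := pow_succ_le_add_pow_of_mem_obstruction (by lia) hm
  have hupper : critical p b j + (p + 1) * b + b ^ k ≤ m + b ^ k :=
    calc critical p b j + (p + 1) * b + b ^ k
      _ ≤ (2 * p + 1) * b ^ k + (p + 1) * b ^ k + b ^ k := by
        gcongr
        exact (critical_le (by lia) j).trans (Nat.mul_le_mul_left _ hpow)
      _ = 3 * (p + 1) * b ^ k := by ring
      _ ≤ m + b ^ k := hwindow
  exact Nat.le_of_add_le_add_right hupper

lemma notMem_removed_of_add_one_lt (hb : 2 * p + 1 < b) (hm : m + 1 < b) : m ∉ removed p b := by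
  rintro ⟨k, -, hk⟩
  have hlower := pow_succ_le_add_pow_of_mem_obstruction hb hk
  have hpos : 0 < b ^ k := Nat.pow_pos (by lia)
  rw [pow_succ'] at hlower
  nlinarith

lemma stageTarget_notMem_obstruction (hb : p + 1 < b) :
    stageTarget p b k ∉ obstruction p b k := by
  rintro ⟨c, hne, hc⟩
  refine hne (eq_const_of_sum_eq_card_mul (sparse_strictMono (b := b) (by lia)) ?_ ?_) <;>
    rw [Fintype.card_fin]
  · exact mul_sparse_lt_sparse_succ (by lia) _
  · exact Nat.add_left_cancel hc

lemma isActive_iff_stageTarget_notMem_removed (hb : 3 * (p + 1) ≤ b) :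
    IsActive p b k ↔ stageTarget p b k ∉ removed p b := by
  constructor
  · rintro hk ⟨j, hj, hmem⟩
    rcases lt_trichotomy j k with hlt | rfl | hlt
    · rw [IsActive] at hk
      exact hk j hlt hj hmem
    · exact stageTarget_notMem_obstruction (by lia) hmem
    · have := critical_add_le_of_mem_obstruction hb hlt hmem
      have := stageTarget_le_critical (p := p) (b := b) k
      have : 0 < (p + 1) * b := Nat.mul_pos p.succ_pos (by lia)
      lia
  · intro hk
    rw [IsActive]
    exact fun j _ hj hmem => hk ⟨j, hj, hmem⟩

lemma isActive_two_mul_add_one (hb : 1 < b) (k : ℕ) : IsActive p b (2 * k + 1) := by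
  rw [IsActive]
  intro j hj _ hmem
  have hle : (p + 1) * b ^ (2 * k + 2) ≤ (2 * p + 1) * b ^ (2 * k + 1) :=
    calc (p + 1) * b ^ (2 * k + 2) ≤ critical p b j :=
          stageTarget_two_mul_add_one (p := p) k ▸ le_critical_of_mem_obstruction hmem
      _ ≤ (2 * p + 1) * b ^ (j + 1) := critical_le hb j
      _ ≤ (2 * p + 1) * b ^ (2 * k + 1) := by gcongr <;> lia
  have hlt : (2 * p + 1) * b ^ (2 * k + 1) < (p + 1) * b ^ (2 * k + 2) :=
    calc (2 * p + 1) * b ^ (2 * k + 1) < (p + 1) * 2 * b ^ (2 * k + 1) :=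
          Nat.mul_lt_mul_of_pos_right (by lia) (Nat.pow_pos (by lia))
      _ ≤ (p + 1) * b * b ^ (2 * k + 1) := by gcongr; exact hb
      _ = (p + 1) * b ^ (2 * k + 2) := by ring
  exact hle.not_gt hlt

/-- At a single stage, the sparse sums belonging to two removed integers differ by the
difference of these integers, which is restricted modulo `b - 1`. -/
lemma notMem_removed_of_add_mem_obstruction (hb : 3 * (p + 1) ≤ b) {d e : ℕ} {c : Fin p → ℕ}
    (hm : m + d ∈ obstruction p b k) (hc : m + d + ∑ i, sparse b (c i) = critical p b k)
    (hd : d < (p + 1) * b) (hde : d ≡ e [MOD b - 1])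
    (hlt : p < (Finset.univ.filter fun i => c i ≠ 0).card + e) (he : e ≤ p + 1) :
    m ∉ removed p b := by
  rintro ⟨j, -, hj⟩
  rcases lt_trichotomy j k with hjk | rfl | hjk
  · have := critical_add_le_of_mem_obstruction hb hjk hm
    have := le_critical_of_mem_obstruction hj
    lia
  · obtain ⟨c', -, hc'⟩ := hj
    have hsum : ∑ i, sparse b (c' i) = ∑ i, sparse b (c i) + d := by lia
    have hcard (c : Fin p → ℕ) : (Finset.univ.filter fun i => c i ≠ 0).card ≤ p := by
      simpa using Finset.card_filter_le (Finset.univ : Finset (Fin p)) (fun i => c i ≠ 0)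
    have hmod := (sum_sparse_modEq (by lia) c').symm.trans
      (hsum ▸ (sum_sparse_modEq (by lia) c).add hde)
    have := hcard c
    have := hcard c'
    have := hmod.eq_of_lt_of_lt (by lia) (by lia)
    lia
  · have := critical_add_le_of_mem_obstruction hb hjk hj
    have := le_critical_of_mem_obstruction hm
    lia

lemma eq_stage_of_add_sum_eq_critical (hk : IsActive p b k) (hm : m ∉ removed p b)
    {c : Fin p → ℕ} (hc : m + ∑ i, sparse b (c i) = critical p b k) :
    m = stageTarget p b k ∧ c = fun _ => stageIndex k := by
  have hconst : c = fun _ => stageIndex k := by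
    by_contra hne
    exact hm ⟨k, hk, c, hne, hc⟩
  refine ⟨?_, hconst⟩
  simpa [hconst, critical] using hc

lemma exists_notMem_removed_add_mul_sparse (hb : 3 * (p + 1) ≤ b) (hm : p * b ≤ m) :
    ∃ q ∉ removed p b, ∃ i, q + p * sparse b i = m := by
  by_cases hmem : m ∈ removed p b
  · obtain ⟨k, hk, hmk⟩ := hmem
    have ⟨c, _, hc⟩ := hmk
    by_cases hcard : (Finset.univ.filter fun i => c i ≠ 0).card = 0
    · have hzero : ∀ i, c i = 0 := by simpa using hcard
      refine ⟨stageTarget p b k, (isActive_iff_stageTarget_notMem_removed hb).mp hk,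
        stageIndex k, ?_⟩
      simpa [hzero, critical] using hc.symm
    · obtain ⟨q, rfl⟩ := Nat.exists_eq_add_of_le' hm
      have hmod : p * b ≡ p [MOD b - 1] := by
        simpa using ((Nat.modEq_iff_dvd' (by lia : 1 ≤ b)).mpr dvd_rfl).symm.mul_left p
      refine ⟨q, notMem_removed_of_add_mem_obstruction hb hmk hc ?_ hmod (by lia) (by lia), 1,
        by simp [sparse]⟩
      exact Nat.mul_lt_mul_of_pos_right p.lt_succ_self (by lia)
  · exact ⟨m, hmem, 0, by simp⟩

lemma exists_notMem_removed_add_notMem_removed (hb : 3 * (p + 1) ≤ b) (hm : p + 1 ≤ m) :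
    ∃ x ∉ removed p b, ∃ y ∉ removed p b, x + y = m := by
  by_cases hmem : m ∈ removed p b
  · obtain ⟨k, -, hmk⟩ := hmem
    have ⟨c, _, hc⟩ := hmk
    obtain ⟨q, rfl⟩ := Nat.exists_eq_add_of_le' hm
    refine ⟨q, notMem_removed_of_add_mem_obstruction hb hmk hc ?_ rfl (by lia) le_rfl, p + 1,
      notMem_removed_of_add_one_lt (by lia) (by lia), rfl⟩
    exact lt_mul_of_one_lt_right p.succ_pos (by lia)
  · exact ⟨m, hmem, 0, notMem_removed_of_add_one_lt (by lia) (by lia), add_zero m⟩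

/-- The minimal asymptotic basis of order `p + 1`, for sufficiently large `b`. -/
def minimalBasis (p b : ℕ) : Set ℕ :=
  residueUnion (p + 1) (removed p b)ᶜ (Set.range (sparse b))

lemma isSumOf_minimalBasis_one_add_mul (hb : 3 * (p + 1) ≤ b) (hm : p * b ≤ m) :
    IsSumOf (minimalBasis p b) (p + 1) (1 + (p + 1) * m) := by
  obtain ⟨q, hq, i, rfl⟩ := exists_notMem_removed_add_mul_sparse hb hm
  exact isSumOf_residueUnion_one_add_mul hq (Set.mem_range_self i)

lemma isSumOf_minimalBasis_add_two_add_mul (hb : 3 * (p + 1) ≤ b) {r : ℕ} (hr : r < p)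
    (hm : p + 1 ≤ m) : IsSumOf (minimalBasis p b) (p + 1) (r + 2 + (p + 1) * m) := by
  obtain ⟨x, hx, y, hy, rfl⟩ := exists_notMem_removed_add_notMem_removed hb hm
  exact isSumOf_residueUnion_add_two_add_mul hr hx hy
    (notMem_removed_of_add_one_lt (by lia) (by lia)) ⟨0, sparse_zero⟩

lemma isAsymptoticBasisOfOrder_minimalBasis (hb : 3 * (p + 1) ≤ b) :
    IsAsymptoticBasisOfOrder (minimalBasis p b) (p + 1) := by
  filter_upwards [eventually_ge_atTop ((p + 1) * (p * b + p + 1) + 2)] with n hn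
  obtain ⟨n, rfl⟩ := Nat.exists_eq_add_of_le' ((Nat.le_add_left _ _).trans hn)
  change IsSumOf (minimalBasis p b) (p + 1) (n + 2)
  have hquot : p * b + p + 1 ≤ n / (p + 1) :=
    (Nat.le_div_iff_mul_le p.succ_pos).mpr (by lia)
  have hdiv := Nat.mod_add_div n (p + 1)
  rcases (Nat.lt_succ_iff.mp (Nat.mod_lt n p.succ_pos)).lt_or_eq with hr | hr
  · convert isSumOf_minimalBasis_add_two_add_mul hb hr (m := n / (p + 1)) (by lia) using 1
    lia
  · convert isSumOf_minimalBasis_one_add_mul hb (m := n / (p + 1) + 1) (by lia) using 1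
    rw [hr] at hdiv
    rw [mul_add]
    lia

lemma exists_eq_stage_of_sum_minimalBasis_eq (hp : 0 < p) (hk : IsActive p b k)
    {a : Fin (p + 1) → ℕ} (ha : ∀ i, a i ∈ minimalBasis p b)
    (hsum : ∑ i, a i = 1 + (p + 1) * critical p b k) :
    (∃ i, a i = 1 + (p + 1) * stageTarget p b k) ∧
      ∃ i, a i = (p + 1) * sparse b (stageIndex k) := by
  obtain ⟨i₀, m, hm, t, ht, hmi, hti, hcrit⟩ := exists_add_sum_eq_of_sum_residueUnion_eq hp ha hsum
  choose c hc using ht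
  simp only [← hc] at hcrit hti
  obtain ⟨rfl, rfl⟩ := eq_stage_of_add_sum_eq_critical hk hm hcrit
  exact ⟨⟨i₀, hmi⟩, i₀.succAbove ⟨0, hp⟩, hti _⟩

lemma exists_sum_forces_mem_of_mem_minimalBasis (hp : 0 < p) (hb : 3 * (p + 1) ≤ b) {a : ℕ}
    (ha : a ∈ minimalBasis p b) (N : ℕ) :
    ∃ n ≥ N, ∀ c : Fin (p + 1) → ℕ, (∀ i, c i ∈ minimalBasis p b) → ∑ i, c i = n →
      ∃ i, c i = a := by
  have hlarge {k : ℕ} (hk : N ≤ k) : N ≤ 1 + (p + 1) * critical p b k :=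
    calc N ≤ critical p b k := hk.trans (le_critical hp (by lia) k)
      _ ≤ (p + 1) * critical p b k := Nat.le_mul_of_pos_left _ p.succ_pos
      _ ≤ 1 + (p + 1) * critical p b k := Nat.le_add_left _ _
  rcases ha with ⟨m, hm, rfl⟩ | ⟨_, ⟨i, rfl⟩, rfl⟩
  · have htarget : stageTarget p b (2 * Nat.pair m N) = m := by simp [stageTarget_two_mul]
    have hactive : IsActive p b (2 * Nat.pair m N) :=
      (isActive_iff_stageTarget_notMem_removed hb).mpr (htarget.symm ▸ hm)
    refine ⟨_, hlarge (k := 2 * Nat.pair m N) ?_, fun c hc hsum => ?_⟩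
    · have := Nat.right_le_pair m N
      lia
    · simpa only [htarget] using (exists_eq_stage_of_sum_minimalBasis_eq hp hactive hc hsum).1
  · have hindex : stageIndex (2 * Nat.pair i N + 1) = i := by simp [stageIndex_two_mul_add_one]
    have hactive : IsActive p b (2 * Nat.pair i N + 1) := isActive_two_mul_add_one (by lia) _
    refine ⟨_, hlarge (k := 2 * Nat.pair i N + 1) ?_, fun c hc hsum => ?_⟩
    · have := Nat.right_le_pair i N
      lia
    · simpa only [hindex] using (exists_eq_stage_of_sum_minimalBasis_eq hp hactive hc hsum).2

lemma isMinimalAsymptoticBasisOfOrder_minimalBasis (hp : 0 < p) (hb : 3 * (p + 1) ≤ b) :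
    IsMinimalAsymptoticBasisOfOrder (minimalBasis p b) (p + 1) :=
  isMinimalAsymptoticBasisOfOrder_of_forall_exists_mem (isAsymptoticBasisOfOrder_minimalBasis hb)
    fun _ ha N => exists_sum_forces_mem_of_mem_minimalBasis hp hb ha N

lemma two_pow_le_of_mem_obstruction (hb : 3 * (p + 1) ≤ b) (hm : m ∈ obstruction p b k) :
    2 ^ (k + 1) ≤ m := by
  have hlower := pow_succ_le_add_pow_of_mem_obstruction (by lia) hm
  have hpow : 2 ^ k ≤ b ^ k := Nat.pow_le_pow_left (by lia) k
  have hbase : 3 * b ^ k ≤ b * b ^ k := Nat.mul_le_mul_right _ (by lia)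
  rw [pow_succ'] at hlower ⊢
  lia

lemma hasDensity_image_removed {q : ℕ} (hq : 0 < q) (hb : 3 * (p + 1) ≤ b) :
    HasDensity ((fun m => 1 + q * m) '' removed p b) 0 := by
  refine hasDensity_zero_of_two_pow_le (ι := Fin (p + 1))
    (fun v => 1 + q * (critical p b (v 0) - ∑ i : Fin p, sparse b (v i.succ))) ?_
  rintro _ ⟨m, ⟨k, -, hmk⟩, rfl⟩ -
  have ⟨c, _, hc⟩ := hmk
  have hpow := two_pow_le_of_mem_obstruction hb hmk
  have hle : 2 ^ (k + 1) ≤ 1 + q * m :=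
    (hpow.trans (Nat.le_mul_of_pos_left m hq)).trans (Nat.le_add_left _ _)
  refine ⟨Fin.cons k c, Fin.cases ?_ fun i => ?_, by simp [← hc]⟩
  · exact (Nat.pow_le_pow_right two_pos k.le_succ).trans hle
  · exact (Nat.pow_le_pow_right two_pos
      (index_le_of_sum_le_critical (by lia) (hc ▸ Nat.le_add_left _ _) i)).trans hle

lemma hasDensity_image_range_sparse {q : ℕ} (hb : 1 < b) :
    HasDensity ((fun t => q * t) '' Set.range (sparse b)) 0 := by
  refine hasDensity_zero_of_two_pow_le (ι := Unit) (fun v => q * sparse b (v ())) ?_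
  rintro _ ⟨_, ⟨i, rfl⟩, rfl⟩ hpos
  have hi : i ≠ 0 := by
    rintro rfl
    simp at hpos
  refine ⟨fun _ => i, fun _ => ?_, rfl⟩
  calc 2 ^ i ≤ b ^ i := Nat.pow_le_pow_left hb i
    _ = sparse b i := (sparse_of_ne_zero hi).symm
    _ ≤ q * sparse b i := Nat.le_mul_of_pos_left _ (Nat.pos_of_mul_pos_right hpos)

lemma hasDensity_minimalBasis (hp : 0 < p) (hb : 3 * (p + 1) ≤ b) :
    HasDensity (minimalBasis p b) (1 / (p + 1 : ℕ)) := by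
  refine hasDensity_residueUnion (by lia) ?_ (hasDensity_image_range_sparse (by lia))
  rw [compl_compl]
  exact hasDensity_image_removed p.succ_pos hb

end Construction

end ErdosNathanson

theorem erdos_nathanson_minimal_basis_density_one_div_h (h : ℕ) (hh : 2 ≤ h) :
    ∃ A : Set ℕ, IsMinimalAsymptoticBasisOfOrder A h ∧
      Tendsto (fun n : ℕ => (countingFn A n : ℝ) / (n : ℝ)) atTop
        (nhds (1 / (h : ℝ))) := by
  obtain ⟨p, rfl⟩ : ∃ p, h = p + 1 := ⟨h - 1, by lia⟩
  exact ⟨ErdosNathanson.minimalBasis p (3 * (p + 1)),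
    ErdosNathanson.isMinimalAsymptoticBasisOfOrder_minimalBasis (by lia) le_rfl,
    ErdosNathanson.hasDensity_minimalBasis (by lia) le_rfl⟩
end
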